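/- arXiv:2202.03992 — 4 statements merged into one kernel-verified Lean document; each statement's English description precedes it below -/
import Mathlib

section
/- Let ℓ be an odd prime number and let k₁, k₂ ≥ 2 be even integers, and set d = gcd(ℓ−1, k₁−1, k₂−1). Then the cardinality of the set 𝒞_ℓ = {(A,B) ∈ GL₂(F_ℓ) × GL₂(F_ℓ) : tr A = tr B = 0, and det A = v^{k₁−1} and det B = v^{k₂−1} for some v ∈ F_ℓ^×} equals (1/d)·ℓ²·(ℓ−1)·(ℓ²+1). -/
/-!
The proof counts the triples `(A, B, v)` with `A`, `B` traceless, `det A = v ^ (k₁ - 1)` and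
`det B = v ^ (k₂ - 1)` in two ways.

* Over a pair `(A, B)` of the set there are exactly `d` values of `v`: they form a fibre of the
  homomorphism `v ↦ (v ^ (k₁ - 1), v ^ (k₂ - 1))` on the cyclic group `F_ℓˣ`, whose kernel is the
  group of `d`-th roots of unity (`card_fiber_powPair`).
* Over a given `v`, the number of pairs is a product of two counts of traceless matrices with given
  determinant. There are `ℓ² + χ(-u) ℓ` traceless matrices of determinant `u`, with `χ` the
  quadratic character (`card_traceless_det`). Since `k₁ - 1` and `k₂ - 1` are odd, both counts are
  `ℓ² + χ(-v) ℓ`.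

As `χ` sums to zero, `∑ v, (ℓ² + χ(-v) ℓ)² = (ℓ - 1) (ℓ⁴ + ℓ²)`, which is the claim.
-/

open Matrix

/-- Traceless invertible matrices `!![a, b; c, -a]` of determinant `u`, described by their entries,
listed in the order `(b, a, c)`. -/
def tracelessEquiv {F : Type*} [Field F] (u : Fˣ) :
    {A : GL (Fin 2) F // Matrix.trace (A : Matrix (Fin 2) (Fin 2) F) = 0 ∧
      GeneralLinearGroup.det A = u} ≃
    {p : F × F × F // p.2.1 ^ 2 + p.1 * p.2.2 = -(u : F)} where
  toFun A := ⟨((A.1 : Matrix (Fin 2) (Fin 2) F) 0 1, (A.1 : Matrix (Fin 2) (Fin 2) F) 0 0,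
      (A.1 : Matrix (Fin 2) (Fin 2) F) 1 0), by
    obtain ⟨A, h1, h2⟩ := A
    rw [Matrix.trace_fin_two] at h1
    have h3 : (A : Matrix (Fin 2) (Fin 2) F).det = u := congrArg Units.val h2
    rw [Matrix.det_fin_two] at h3
    linear_combination -h3 + (A : Matrix (Fin 2) (Fin 2) F) 0 0 * h1⟩
  invFun p := ⟨GeneralLinearGroup.mkOfDetNeZero !![p.1.2.1, p.1.1; p.1.2.2, -p.1.2.1] (by
      have h : (!![p.1.2.1, p.1.1; p.1.2.2, -p.1.2.1] : Matrix (Fin 2) (Fin 2) F).det = u := by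
        rw [Matrix.det_fin_two_of]; linear_combination -p.2
      rw [h]; exact u.ne_zero), by
    constructor
    · change (!![p.1.2.1, p.1.1; p.1.2.2, -p.1.2.1] : Matrix (Fin 2) (Fin 2) F).trace = 0
      rw [Matrix.trace_fin_two_of, add_neg_cancel]
    · ext
      change (!![p.1.2.1, p.1.1; p.1.2.2, -p.1.2.1] : Matrix (Fin 2) (Fin 2) F).det = u
      rw [Matrix.det_fin_two_of]; linear_combination -p.2⟩
  left_inv A := by
    obtain ⟨A, h1, h2⟩ := A
    rw [Matrix.trace_fin_two] at h1
    apply Subtype.ext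
    apply GeneralLinearGroup.ext
    intro i j
    fin_cases i <;> fin_cases j
    · rfl
    · rfl
    · rfl
    · exact (eq_neg_of_add_eq_zero_right h1).symm
  right_inv _ := rfl

/-- For `b ≠ 0` the equation `a ^ 2 + b * c = -u` determines `c`; for `b = 0` the entry `c` is free
and `a` is a square root of `-u`. -/
theorem card_traceless_det {F : Type*} [Field F] [Fintype F] [DecidableEq F]
    (hF : ringChar F ≠ 2) (u : Fˣ) :
    (Nat.card {A : GL (Fin 2) F // Matrix.trace (A : Matrix (Fin 2) (Fin 2) F) = 0 ∧
      GeneralLinearGroup.det A = u} : ℤ) =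
    (Fintype.card F : ℤ) ^ 2 + quadraticChar F (-(u : F)) * Fintype.card F := by
  rw [Nat.card_congr (tracelessEquiv u), Nat.card_eq_fintype_card, Fintype.card_subtype,
    Finset.card_filter, Fintype.sum_prod_type]
  simp_rw [Fintype.sum_prod_type]
  push_cast
  rw [← Finset.sum_erase_add _ _ (Finset.mem_univ (0 : F))]
  have h0 : (∑ a : F, ∑ c : F, if a ^ 2 + 0 * c = -(u : F) then (1 : ℤ) else 0) =
      (quadraticChar F (-(u : F)) + 1) * Fintype.card F := by
    rw [← quadraticChar_card_sqrts hF (-(u : F))]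
    have h : ({x : F | x ^ 2 = -(u : F)} : Set F).toFinset =
        Finset.univ.filter (fun x : F => x ^ 2 = -(u : F)) := by ext; simp
    rw [h, Finset.card_filter]
    push_cast
    rw [Finset.sum_mul]
    refine Finset.sum_congr rfl fun a _ => ?_
    by_cases ha : a ^ 2 = -(u : F) <;> simp [ha]
  have h1 : ∀ b ∈ Finset.univ.erase (0 : F),
      (∑ a : F, ∑ c : F, if a ^ 2 + b * c = -(u : F) then (1 : ℤ) else 0) = Fintype.card F := by
    intro b hb
    have hb0 : b ≠ 0 := (Finset.mem_erase.1 hb).1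
    have : ∀ a : F, (∑ c : F, if a ^ 2 + b * c = -(u : F) then (1 : ℤ) else 0) = 1 := by
      intro a
      have h : ∀ c : F, a ^ 2 + b * c = -(u : F) ↔ c = (-(u : F) - a ^ 2) / b := by
        intro c
        rw [eq_div_iff hb0]
        constructor <;> intro h <;> linear_combination h
      simp_rw [h]
      simp
    simp [this]
  rw [Finset.sum_congr rfl h1, h0, Finset.sum_const, Finset.card_erase_of_mem (Finset.mem_univ _),
    Finset.card_univ, nsmul_eq_mul, Nat.cast_sub Fintype.card_pos]
  push_cast
  ring

/-- The nonempty fibres of `v ↦ (v ^ m, v ^ n)` on a finite cyclic group are cosets of the kernel,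
which consists of the `g` with `g ^ gcd m n = 1`. -/
theorem card_fiber_powPair {G : Type*} [CommGroup G] [IsCyclic G] [Fintype G] [DecidableEq G]
    (m n : ℕ) (w : G) :
    (Finset.univ.filter fun v : G => w ^ m = v ^ m ∧ w ^ n = v ^ n).card =
      ((Fintype.card G).gcd m).gcd n := by
  rw [Nat.gcd_assoc, ← Nat.card_eq_fintype_card, ← IsCyclic.card_powMonoidHom_ker,
    ← Fintype.card_subtype, ← Nat.card_eq_fintype_card]
  refine Nat.card_congr ((Equiv.mulRight w⁻¹).subtypeEquiv fun v => ?_)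
  have h : ∀ k : ℕ, w ^ k = v ^ k ↔ (v * w⁻¹) ^ k = 1 := by
    intro k
    rw [mul_pow, inv_pow, mul_inv_eq_one, eq_comm]
  rw [h, h, MonoidHom.mem_ker, powMonoidHom_apply, ← orderOf_dvd_iff_pow_eq_one,
    ← orderOf_dvd_iff_pow_eq_one, ← Nat.dvd_gcd_iff, orderOf_dvd_iff_pow_eq_one]
  rfl

theorem quadraticChar_neg_odd_pow {F : Type*} [Field F] [Fintype F] [DecidableEq F]
    (v : Fˣ) {m : ℕ} (hm : Odd m) :
    quadraticChar F (-((v ^ m : Fˣ) : F)) = quadraticChar F (-(v : F)) := by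
  obtain ⟨j, rfl⟩ := hm
  have h : -((v ^ (2 * j + 1) : Fˣ) : F) = -(v : F) * ((v : F) ^ j) ^ 2 := by
    push_cast; ring
  rw [h, map_mul, quadraticChar_sq_one' (pow_ne_zero _ v.ne_zero), mul_one]

theorem sum_quadraticChar_neg_units {F : Type*} [Field F] [Fintype F] [DecidableEq F]
    (hF : ringChar F ≠ 2) : ∑ v : Fˣ, quadraticChar F (-(v : F)) = 0 := by
  have h : ∑ a : F, quadraticChar F (-a) = 0 := by
    rw [← quadraticChar_sum_zero hF]
    exact Equiv.sum_comp (Equiv.neg F) (fun a => quadraticChar F a)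
  rw [Fintype.sum_eq_add_sum_compl (0 : F)] at h
  rw [neg_zero, quadraticChar_zero, zero_add] at h
  rw [← h]
  refine Finset.sum_bij (fun v _ => (v : F)) ?_ ?_ ?_ ?_
  · intro v _; simp
  · intro a _ b _ hab; exact Units.ext hab
  · intro b hb
    exact ⟨Units.mk0 b (by simpa using hb), Finset.mem_univ _, rfl⟩
  · intro v _; rfl

theorem card_C_ell (ℓ k₁ k₂ : ℕ) (hℓ : ℓ.Prime) (hodd : Odd ℓ)
    (hk₁ : 2 ≤ k₁) (hk₂ : 2 ≤ k₂) (he₁ : Even k₁) (he₂ : Even k₂)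
    (d : ℕ) (hd : d = Nat.gcd (Nat.gcd (ℓ - 1) (k₁ - 1)) (k₂ - 1)) :
    Nat.card {AB : GL (Fin 2) (ZMod ℓ) × GL (Fin 2) (ZMod ℓ) |
      Matrix.trace (AB.1 : Matrix (Fin 2) (Fin 2) (ZMod ℓ)) = 0 ∧
      Matrix.trace (AB.2 : Matrix (Fin 2) (Fin 2) (ZMod ℓ)) = 0 ∧
      ∃ v : (ZMod ℓ)ˣ, GeneralLinearGroup.det AB.1 = v ^ (k₁ - 1) ∧
        GeneralLinearGroup.det AB.2 = v ^ (k₂ - 1)} * d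
      = ℓ ^ 2 * (ℓ - 1) * (ℓ ^ 2 + 1) := by
  classical
  have : Fact ℓ.Prime := ⟨hℓ⟩
  have hF : ringChar (ZMod ℓ) ≠ 2 := by
    rw [ZMod.ringChar_zmod_n]
    rintro rfl
    exact absurd hodd (by decide)
  have ho₁ : Odd (k₁ - 1) := Nat.Even.sub_odd (by omega) he₁ odd_one
  have ho₂ : Odd (k₂ - 1) := Nat.Even.sub_odd (by omega) he₂ odd_one
  set m := k₁ - 1
  set n := k₂ - 1
  have hcard : Fintype.card (ZMod ℓ)ˣ = ℓ - 1 := ZMod.card_units ℓ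
  let C : Finset (GL (Fin 2) (ZMod ℓ) × GL (Fin 2) (ZMod ℓ)) := Finset.univ.filter fun AB =>
      Matrix.trace (AB.1 : Matrix (Fin 2) (Fin 2) (ZMod ℓ)) = 0 ∧
      Matrix.trace (AB.2 : Matrix (Fin 2) (Fin 2) (ZMod ℓ)) = 0 ∧
      ∃ v : (ZMod ℓ)ˣ, GeneralLinearGroup.det AB.1 = v ^ m ∧ GeneralLinearGroup.det AB.2 = v ^ n
  have hC : Nat.card {AB : GL (Fin 2) (ZMod ℓ) × GL (Fin 2) (ZMod ℓ) |
      Matrix.trace (AB.1 : Matrix (Fin 2) (Fin 2) (ZMod ℓ)) = 0 ∧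
      Matrix.trace (AB.2 : Matrix (Fin 2) (Fin 2) (ZMod ℓ)) = 0 ∧
      ∃ v : (ZMod ℓ)ˣ, GeneralLinearGroup.det AB.1 = v ^ m ∧
        GeneralLinearGroup.det AB.2 = v ^ n} = C.card := by
    rw [Nat.card_eq_fintype_card]
    exact Fintype.card_subtype _
  rw [hC]
  have hdouble := Finset.sum_card_bipartiteAbove_eq_sum_card_bipartiteBelow (s := C)
    (t := (Finset.univ : Finset (ZMod ℓ)ˣ))
    (fun AB v => GeneralLinearGroup.det AB.1 = v ^ m ∧ GeneralLinearGroup.det AB.2 = v ^ n)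
  have hleft : ∀ AB ∈ C, (Finset.univ.bipartiteAbove (fun AB (v : (ZMod ℓ)ˣ) =>
      GeneralLinearGroup.det AB.1 = v ^ m ∧ GeneralLinearGroup.det AB.2 = v ^ n) AB).card = d := by
    intro AB hAB
    obtain ⟨-, -, w, hw₁, hw₂⟩ := (Finset.mem_filter.1 hAB).2
    rw [hd, ← hcard, ← card_fiber_powPair m n w, Finset.bipartiteAbove, hw₁, hw₂]
  have hright : ∀ v : (ZMod ℓ)ˣ, ((C.bipartiteBelow (fun AB (v : (ZMod ℓ)ˣ) =>
      GeneralLinearGroup.det AB.1 = v ^ m ∧ GeneralLinearGroup.det AB.2 = v ^ n) v).card : ℤ) =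
      ((ℓ : ℤ) ^ 2 + quadraticChar (ZMod ℓ) (-(v : ZMod ℓ)) * ℓ) ^ 2 := by
    intro v
    have hprod : C.bipartiteBelow (fun AB (v : (ZMod ℓ)ˣ) =>
        GeneralLinearGroup.det AB.1 = v ^ m ∧ GeneralLinearGroup.det AB.2 = v ^ n) v =
        (Finset.univ.filter fun A : GL (Fin 2) (ZMod ℓ) =>
          Matrix.trace (A : Matrix (Fin 2) (Fin 2) (ZMod ℓ)) = 0 ∧
            GeneralLinearGroup.det A = v ^ m) ×ˢ
        (Finset.univ.filter fun A : GL (Fin 2) (ZMod ℓ) =>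
          Matrix.trace (A : Matrix (Fin 2) (Fin 2) (ZMod ℓ)) = 0 ∧
            GeneralLinearGroup.det A = v ^ n) := by
      ext AB
      simp only [Finset.bipartiteBelow, C, Finset.mem_filter, Finset.mem_univ, true_and,
        Finset.mem_product]
      constructor
      · rintro ⟨⟨h1, h2, -⟩, h3, h4⟩
        exact ⟨⟨h1, h3⟩, h2, h4⟩
      · rintro ⟨⟨h1, h3⟩, h2, h4⟩
        exact ⟨⟨h1, h2, v, h3, h4⟩, h3, h4⟩
    rw [hprod, Finset.card_product, ← Fintype.card_subtype, ← Fintype.card_subtype,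
      ← Nat.card_eq_fintype_card, ← Nat.card_eq_fintype_card, Nat.cast_mul,
      card_traceless_det hF, card_traceless_det hF, quadraticChar_neg_odd_pow v ho₁,
      quadraticChar_neg_odd_pow v ho₂, ZMod.card, sq (_ + _)]
  rw [Finset.sum_congr rfl hleft, Finset.sum_const, smul_eq_mul] at hdouble
  rw [hdouble]
  zify [hℓ.one_le]
  have hsq : ∀ v : (ZMod ℓ)ˣ,
      ((ℓ : ℤ) ^ 2 + quadraticChar (ZMod ℓ) (-(v : ZMod ℓ)) * ℓ) ^ 2 =
      ((ℓ : ℤ) ^ 4 + ℓ ^ 2) + 2 * ℓ ^ 3 * quadraticChar (ZMod ℓ) (-(v : ZMod ℓ)) := by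
    intro v
    have := quadraticChar_sq_one (neg_ne_zero.2 v.ne_zero)
    linear_combination (ℓ : ℤ) ^ 2 * this
  simp_rw [hright, hsq]
  rw [Finset.sum_add_distrib, ← Finset.mul_sum, sum_quadraticChar_neg_units hF, Finset.sum_const,
    Finset.card_univ, hcard, nsmul_eq_mul, Nat.cast_sub hℓ.one_le]
  push_cast
  ring
end

section
/- Let ℓ be an odd prime and let t ∈ F_ℓ^× be a nonzero element. Then the number of matrices A ∈ GL₂(F_ℓ) with det A = t and tr A = 0 equals ℓ² + ℓ if −t is a square in F_ℓ, and equals ℓ² − ℓ if −t is not a square in F_ℓ. -/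
open Matrix

/-!
A trace-zero matrix is `!![a, b; c, -a]`, and its determinant is `t` exactly when
`a ^ 2 + b * c = w` with `w = -t`. On this affine quadric, each `b ≠ 0` leaves `a` free and
determines `c`, giving `ℓ (ℓ - 1)` points; `b = 0` forces `a ^ 2 = w` and leaves `c` free, giving
`ℓ (1 + χ w)` points, where `χ` is the quadratic character. The total is `ℓ ^ 2 + χ w * ℓ`.
-/

/-- Coordinates on the matrices of trace zero and determinant `t`. -/
def traceZeroEquiv {F : Type*} [Field F] (t : Fˣ) :
    {A : GL (Fin 2) F | GeneralLinearGroup.det A = t ∧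
      Matrix.trace (A : Matrix (Fin 2) (Fin 2) F) = 0} ≃
    {p : F × F × F // p.2.1 ^ 2 + p.1 * p.2.2 = -(t : F)} where
  toFun A := ⟨((A.1 : Matrix (Fin 2) (Fin 2) F) 0 1, (A.1 : Matrix (Fin 2) (Fin 2) F) 0 0,
      (A.1 : Matrix (Fin 2) (Fin 2) F) 1 0), by
    obtain ⟨A, hd, ht⟩ := A
    have hd' := congrArg Units.val hd
    simp only [GeneralLinearGroup.val_det_apply, det_fin_two, trace_fin_two] at hd' ht
    linear_combination -hd' + (A : Matrix (Fin 2) (Fin 2) F) 0 0 * ht⟩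
  invFun p := ⟨GeneralLinearGroup.mkOfDetNeZero !![p.1.2.1, p.1.1; p.1.2.2, -p.1.2.1] (by
      have h := p.2
      have : det !![p.1.2.1, p.1.1; p.1.2.2, -p.1.2.1] = (t : F) := by
        rw [det_fin_two_of]; linear_combination -h
      rw [this]; exact t.ne_zero), by
    have h := p.2
    refine ⟨Units.ext ?_, ?_⟩
    · change det !![p.1.2.1, p.1.1; p.1.2.2, -p.1.2.1] = (t : F)
      rw [det_fin_two_of]; linear_combination -h
    · change trace !![p.1.2.1, p.1.1; p.1.2.2, -p.1.2.1] = 0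
      simp [trace_fin_two]⟩
  left_inv A := by
    obtain ⟨A, hd, ht⟩ := A
    rw [trace_fin_two] at ht
    apply Subtype.ext
    apply Units.ext
    change !![(A : Matrix (Fin 2) (Fin 2) F) 0 0, (A : Matrix (Fin 2) (Fin 2) F) 0 1;
      (A : Matrix (Fin 2) (Fin 2) F) 1 0, -(A : Matrix (Fin 2) (Fin 2) F) 0 0] = A.val
    rw [← eq_neg_of_add_eq_zero_right ht]
    exact (eta_fin_two A.val).symm
  right_inv p := rfl

/-- The points of `a ^ 2 + b * c = w`, written `(b, a, c)`, split according to whether `b = 0`. -/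
theorem card_quadric {F : Type*} [Field F] [Fintype F] [DecidableEq F] (w : F) :
    Fintype.card {p : F × F × F // p.2.1 ^ 2 + p.1 * p.2.2 = w} =
      (Fintype.card F - 1) * Fintype.card F +
        Fintype.card F * (Finset.univ.filter fun a : F => a ^ 2 = w).card := by
  have fiber (b : F) (hb : b ∈ Finset.univ.erase (0 : F)) :
      ∑ a : F, ∑ c : F, (if a ^ 2 + b * c = w then 1 else 0) = Fintype.card F := by
    have hb : b ≠ 0 := Finset.ne_of_mem_erase hb
    have h (a c : F) : a ^ 2 + b * c = w ↔ c = (w - a ^ 2) / b := by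
      rw [eq_div_iff hb]
      constructor <;> intro h <;> linear_combination h
    simp [h]
  rw [Fintype.card_subtype, Finset.card_filter, Fintype.sum_prod_type]
  simp_rw [Fintype.sum_prod_type]
  rw [← Finset.sum_erase_add _ _ (Finset.mem_univ (0 : F)), Finset.sum_congr rfl fiber]
  congr 1
  · simp [Finset.card_erase_of_mem]
  · rw [Finset.card_filter, Finset.mul_sum]
    refine Finset.sum_congr rfl fun a _ => ?_
    by_cases h : a ^ 2 = w <;> simp [h]

open scoped Classical in
theorem card_det_t_trace_zero (ℓ : ℕ) (hℓ : ℓ.Prime) (hodd : Odd ℓ) (t : (ZMod ℓ)ˣ) :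
    Nat.card {A : GL (Fin 2) (ZMod ℓ) |
      GeneralLinearGroup.det A = t ∧
      Matrix.trace (A : Matrix (Fin 2) (Fin 2) (ZMod ℓ)) = 0}
      = if IsSquare (-(t : ZMod ℓ)) then ℓ ^ 2 + ℓ else ℓ ^ 2 - ℓ := by
  have : Fact ℓ.Prime := ⟨hℓ⟩
  have hchar : ringChar (ZMod ℓ) ≠ 2 := by
    rw [ZMod.ringChar_zmod_n]
    rintro rfl
    exact absurd hodd (by decide)
  have hw : -(t : ZMod ℓ) ≠ 0 := neg_ne_zero.mpr t.ne_zero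
  have hs := quadraticChar_card_sqrts hchar (-(t : ZMod ℓ))
  rw [Set.toFinset_ofPred] at hs
  rw [Nat.card_congr (traceZeroEquiv t), Nat.card_eq_fintype_card]
  have hc := card_quadric (-(t : ZMod ℓ))
  rw [ZMod.card] at hc
  obtain ⟨m, rfl⟩ : ∃ m, ℓ = m + 1 := ⟨ℓ - 1, by have := hℓ.pos; omega⟩
  split_ifs with h
  · rw [(quadraticChar_one_iff_isSquare hw).mpr h] at hs
    have hs' : (Finset.univ.filter fun a : ZMod (m + 1) => a ^ 2 = -(t : ZMod (m + 1))).card = 2 := by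
      zify; convert hs; norm_num
    convert hc using 1
    rw [hs', Nat.add_sub_cancel]; ring
  · rw [quadraticChar_neg_one_iff_not_isSquare.mpr h] at hs
    have hs' : (Finset.univ.filter fun a : ZMod (m + 1) => a ^ 2 = -(t : ZMod (m + 1))).card = 0 := by
      zify; convert hs; norm_num
    convert hc using 1
    rw [hs', Nat.add_sub_cancel, mul_zero, add_zero]
    exact Nat.sub_eq_of_eq_add (by ring)
end

section
/- Let ℓ be an odd prime and let k₁, k₂ ≥ 2 be even integers. Then the ratio |𝒞_ℓ|/|𝒜_ℓ| equals (ℓ²+1)/(ℓ²−1)², and this quantity is at most 3/ℓ². Moreover, the real sequence ℓ ↦ ℓ²·(ℓ²+1)/(ℓ²−1)² tends to 1 as ℓ → ∞. -/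
/-!
`𝒜_ℓ` is the preimage under `(A, B) ↦ (det A, det B)` of the subgroup
`H = {(v ^ (k₁ - 1), v ^ (k₂ - 1))}` of `𝔽_ℓˣ × 𝔽_ℓˣ`. Each fibre of `det` on `GL₂` has `ℓ³ - ℓ`
elements (`card_det`), and its trace-zero part over `x` has `ℓ² + ℓ χ(-x)` elements, with `χ` the
quadratic character (`card_det_trace`); both follow from the count of solutions of `b c = t`
(`sum_mul_eq`). As `k₁ - 1` and `k₂ - 1` are odd, `χ` takes the same value on both coordinates of
an element of `H`, namely `χ(v)`. Hence each `(x, y) ∈ H` contributes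
`(ℓ² + ℓ χ(-x))² = ℓ⁴ + ℓ² + 2 ℓ³ χ(-x)` to `|𝒞_ℓ|`, and the last term sums to zero because `χ` is
nontrivial on `H`. The ratio is therefore `|H| ℓ² (ℓ² + 1) / (|H| (ℓ³ - ℓ)²)`.
-/

open Matrix Filter

/-- The set 𝒜_ℓ attached to weights `k₁, k₂` and the prime `ℓ`. -/
def Aset (ℓ k₁ k₂ : ℕ) : Set (GL (Fin 2) (ZMod ℓ) × GL (Fin 2) (ZMod ℓ)) :=
  {AB | ∃ v : (ZMod ℓ)ˣ, GeneralLinearGroup.det AB.1 = v ^ (k₁ - 1) ∧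
    GeneralLinearGroup.det AB.2 = v ^ (k₂ - 1)}

/-- The set 𝒞_ℓ of elements of 𝒜_ℓ with both traces zero. -/
def Cset (ℓ k₁ k₂ : ℕ) : Set (GL (Fin 2) (ZMod ℓ) × GL (Fin 2) (ZMod ℓ)) :=
  {AB ∈ Aset ℓ k₁ k₂ |
    Matrix.trace (AB.1 : Matrix (Fin 2) (Fin 2) (ZMod ℓ)) = 0 ∧
    Matrix.trace (AB.2 : Matrix (Fin 2) (Fin 2) (ZMod ℓ)) = 0}

section Counting

variable {F : Type*} [Field F] [Fintype F] [DecidableEq F]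

/-- The number of pairs `(b, c)` with `b * c = t`. -/
lemma sum_mul_eq (t : F) :
    ∑ b : F, ∑ c : F, (if b * c = t then (1 : ℤ) else 0)
      = (Fintype.card F - 1) + if t = 0 then (Fintype.card F : ℤ) else 0 := by
  have h : ∀ b : F, ∑ c : F, (if b * c = t then (1 : ℤ) else 0)
      = 1 + if b = 0 then (if t = 0 then (Fintype.card F : ℤ) else 0) - 1 else 0 := by
    intro b
    by_cases hb : b = 0
    · by_cases ht : t = 0
      · simp [hb, ht]
      · simp [hb, ht, Ne.symm ht]
    · have : ∀ c : F, (b * c = t) ↔ (c = b⁻¹ * t) := fun c => by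
        rw [eq_inv_mul_iff_mul_eq₀ hb]
      simp [this, hb]
  simp only [h, Finset.sum_add_distrib, Finset.sum_ite_eq', Finset.mem_univ, if_true]
  simp
  ring

/-- The fibre of `det` on `GL₂` over `x`, as the quadruples `((a, d), (b, c))` with
`a d - b c = x`; the diagonal entries come first. -/
noncomputable def fibreEquiv (x : Fˣ) :
    {g : GL (Fin 2) F // GeneralLinearGroup.det g = x} ≃
      {p : (F × F) × F × F // p.1.1 * p.1.2 - p.2.1 * p.2.2 = x} where
  toFun g := ⟨((g.1 0 0, g.1 1 1), (g.1 0 1, g.1 1 0)), by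
    have := congrArg Units.val g.2
    simpa [Matrix.det_fin_two] using this⟩
  invFun p := ⟨GeneralLinearGroup.mkOfDetNeZero !![p.1.1.1, p.1.2.1; p.1.2.2, p.1.1.2] (by
      rw [Matrix.det_fin_two_of, p.2]; exact x.ne_zero), by
    ext
    simpa [GeneralLinearGroup.mkOfDetNeZero, Matrix.det_fin_two] using p.2⟩
  left_inv g := by
    apply Subtype.ext
    apply Units.ext
    ext i j
    fin_cases i <;> fin_cases j <;> simp [GeneralLinearGroup.mkOfDetNeZero]
  right_inv p := by
    apply Subtype.ext
    simp [GeneralLinearGroup.mkOfDetNeZero]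

lemma card_det (x : Fˣ) :
    (Nat.card {g : GL (Fin 2) F // GeneralLinearGroup.det g = x} : ℤ)
      = (Fintype.card F : ℤ) ^ 3 - Fintype.card F := by
  rw [Nat.card_congr (fibreEquiv x), Nat.card_eq_fintype_card, Fintype.card_subtype,
    Finset.card_filter]
  push_cast
  simp only [Fintype.sum_prod_type]
  have h : ∀ a d : F, ∑ b : F, ∑ c : F, (if a * d - b * c = (x : F) then (1 : ℤ) else 0)
      = (Fintype.card F - 1) + Fintype.card F * if a * d = x then (1 : ℤ) else 0 := by
    intro a d
    have e : ∀ b c : F, (a * d - b * c = (x : F)) ↔ (b * c = a * d - x) := fun b c => by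
      constructor <;> intro h <;> linear_combination -h
    simp only [e, sum_mul_eq, sub_eq_zero, mul_ite, mul_one, mul_zero]
  simp only [h, Finset.sum_add_distrib, ← Finset.mul_sum, sum_mul_eq]
  simp
  ring

lemma card_det_trace (hF : ringChar F ≠ 2) (x : Fˣ) :
    (Nat.card {g : GL (Fin 2) F // GeneralLinearGroup.det g = x ∧
        Matrix.trace (g : Matrix (Fin 2) (Fin 2) F) = 0} : ℤ)
      = (Fintype.card F : ℤ) ^ 2 + Fintype.card F * quadraticChar F (-x) := by
  let e : {g : GL (Fin 2) F // GeneralLinearGroup.det g = x ∧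
        Matrix.trace (g : Matrix (Fin 2) (Fin 2) F) = 0} ≃
      {p : F × F × F // -p.1 ^ 2 - p.2.1 * p.2.2 = (x : F)} :=
    { toFun := fun g => ⟨(g.1 0 0, g.1 0 1, g.1 1 0), by
        have h1 := (fibreEquiv x ⟨g.1, g.2.1⟩).2
        have h2 := g.2.2
        rw [Matrix.trace_fin_two] at h2
        simp only [fibreEquiv, Equiv.coe_fn_mk] at h1
        linear_combination h1 - g.1 0 0 * h2⟩
      invFun := fun p => ⟨((fibreEquiv x).symm ⟨((p.1.1, -p.1.1), p.1.2), by
          linear_combination p.2⟩).1, ((fibreEquiv x).symm _).2, by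
        simp [fibreEquiv, GeneralLinearGroup.mkOfDetNeZero, Matrix.trace_fin_two]⟩
      left_inv := fun g => by
        have h2 := g.2.2
        rw [Matrix.trace_fin_two] at h2
        have h3 := eq_neg_of_add_eq_zero_right h2
        apply Subtype.ext
        apply Units.ext
        ext i j
        fin_cases i <;> fin_cases j <;>
          simp [fibreEquiv, GeneralLinearGroup.mkOfDetNeZero, h3]
      right_inv := fun p => by
        apply Subtype.ext
        simp [fibreEquiv, GeneralLinearGroup.mkOfDetNeZero] }
  rw [Nat.card_congr e, Nat.card_eq_fintype_card, Fintype.card_subtype, Finset.card_filter]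
  push_cast
  simp only [Fintype.sum_prod_type]
  have h : ∀ a : F, ∑ b : F, ∑ c : F, (if -a ^ 2 - b * c = (x : F) then (1 : ℤ) else 0)
      = (Fintype.card F - 1) + Fintype.card F * if a ^ 2 = -x then (1 : ℤ) else 0 := by
    intro a
    have e : ∀ b c : F, (-a ^ 2 - b * c = (x : F)) ↔ (b * c = -a ^ 2 - x) := fun b c => by
      constructor <;> intro h <;> linear_combination -h
    have e' : (-a ^ 2 - (x : F) = 0) ↔ (a ^ 2 = -x) := by
      constructor <;> intro h <;> linear_combination -h
    simp only [e, sum_mul_eq, e', mul_ite, mul_one, mul_zero]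
  have hs : ∑ a : F, (if a ^ 2 = -(x : F) then (1 : ℤ) else 0) = quadraticChar F (-x) + 1 := by
    rw [← quadraticChar_card_sqrts hF, Finset.sum_boole]
    congr 2
    ext a
    simp
  simp only [h, Finset.sum_add_distrib, ← Finset.mul_sum, hs]
  simp
  ring

/-- The image of `v ↦ (v ^ m, v ^ n)`, the group of admissible pairs of determinants. -/
def detPairs (F : Type*) [Field F] (m n : ℕ) : Subgroup (Fˣ × Fˣ) :=
  ((powMonoidHom m).prod (powMonoidHom n) : Fˣ →* Fˣ × Fˣ).range

lemma sum_quadraticChar_detPairs (hF : ringChar F ≠ 2) {m n : ℕ} (hm : Odd m)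
    [Fintype (detPairs F m n)] :
    ∑ h : detPairs F m n, quadraticChar F (-(h.1.1 : F)) = 0 := by
  obtain ⟨a, ha⟩ := quadraticChar_exists_neg_one hF
  have ha0 : a ≠ 0 := by rintro rfl; simp at ha
  let g : detPairs F m n := ⟨(Units.mk0 a ha0 ^ m, Units.mk0 a ha0 ^ n), ⟨Units.mk0 a ha0, rfl⟩⟩
  -- Translation by `g`, where `χ` is `-1` on the first coordinate, changes the sign of the sum.
  have h := Equiv.sum_comp (Equiv.mulLeft g)
    (fun h : detPairs F m n => quadraticChar F (-(h.1.1 : F)))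
  have h2 : ∀ h : detPairs F m n, quadraticChar F (-(((Equiv.mulLeft g) h).1.1 : F))
      = - quadraticChar F (-(h.1.1 : F)) := by
    intro h
    have : (-(((Equiv.mulLeft g) h).1.1 : F)) = a ^ m * (-(h.1.1 : F)) := by
      simp [g]
    rw [this, map_mul, map_pow, ha, hm.neg_one_pow]
    ring
  simp only [h2, Finset.sum_neg_distrib] at h
  linarith

/-- On `detPairs F m n` with `m`, `n` odd, the quadratic character agrees on both coordinates. -/
lemma quadraticChar_detPairs {m n : ℕ} (hm : Odd m) (hn : Odd n) (h : detPairs F m n) :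
    quadraticChar F (-(h.1.2 : F)) = quadraticChar F (-(h.1.1 : F)) ∧
      quadraticChar F (-(h.1.1 : F)) ^ 2 = 1 := by
  obtain ⟨⟨x, y⟩, v, hv⟩ := h
  have hx : v ^ m = x := congrArg Prod.fst hv
  have hy : v ^ n = y := congrArg Prod.snd hv
  refine ⟨?_, quadraticChar_sq_one (neg_ne_zero.mpr x.ne_zero)⟩
  subst hx hy
  have key : ∀ k : ℕ, Odd k →
      quadraticChar F (-((v ^ k : Fˣ) : F)) = quadraticChar F (-1) * quadraticChar F v := by
    intro k hk
    rw [neg_eq_neg_one_mul, map_mul, Units.val_pow_eq_pow_val, map_pow]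
    rcases quadraticChar_dichotomy v.ne_zero with h | h <;> simp [h, hk.neg_one_pow]
  rw [key m hm, key n hn]

end Counting

/-- A set of pairs cut out by a condition on the determinants and the same condition `Q` on both
components is counted fibre by fibre. -/
lemma card_pairs {F : Type*} [Field F] [Fintype F] (m n : ℕ)
    (Q : GL (Fin 2) F → Prop) [Fintype (detPairs F m n)] :
    Nat.card {AB : GL (Fin 2) F × GL (Fin 2) F //
        (∃ v : Fˣ, GeneralLinearGroup.det AB.1 = v ^ m ∧ GeneralLinearGroup.det AB.2 = v ^ n) ∧
          Q AB.1 ∧ Q AB.2}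
      = ∑ h : detPairs F m n, Nat.card {g : GL (Fin 2) F // GeneralLinearGroup.det g = h.1.1 ∧ Q g} *
          Nat.card {g : GL (Fin 2) F // GeneralLinearGroup.det g = h.1.2 ∧ Q g} := by
  let e : {AB : GL (Fin 2) F × GL (Fin 2) F //
        (∃ v : Fˣ, GeneralLinearGroup.det AB.1 = v ^ m ∧ GeneralLinearGroup.det AB.2 = v ^ n) ∧
          Q AB.1 ∧ Q AB.2} ≃
      Σ h : detPairs F m n, {g : GL (Fin 2) F // GeneralLinearGroup.det g = h.1.1 ∧ Q g} ×
          {g : GL (Fin 2) F // GeneralLinearGroup.det g = h.1.2 ∧ Q g} :=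
    { toFun := fun p => ⟨⟨(GeneralLinearGroup.det p.1.1, GeneralLinearGroup.det p.1.2), by
          obtain ⟨v, h1, h2⟩ := p.2.1
          exact ⟨v, Prod.ext h1.symm h2.symm⟩⟩, ⟨p.1.1, rfl, p.2.2.1⟩, ⟨p.1.2, rfl, p.2.2.2⟩⟩
      invFun := fun q => ⟨(q.2.1.1, q.2.2.1), by
        obtain ⟨v, hv⟩ := q.1.2
        exact ⟨v, q.2.1.2.1.trans (congrArg Prod.fst hv).symm,
          q.2.2.2.1.trans (congrArg Prod.snd hv).symm⟩, q.2.1.2.2, q.2.2.2.2⟩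
      left_inv := fun p => rfl
      right_inv := by
        rintro ⟨⟨⟨x, y⟩, h⟩, ⟨A, hA, hA'⟩, ⟨B, hB, hB'⟩⟩
        dsimp only at hA hB
        subst hA hB
        rfl }
  rw [Nat.card_congr e, Nat.card_sigma]
  simp only [Nat.card_prod]

theorem delta_ell_value_bound_and_limit (ℓ k₁ k₂ : ℕ) (hℓ : ℓ.Prime) (hodd : Odd ℓ)
    (hk₁ : 2 ≤ k₁) (hk₂ : 2 ≤ k₂) (he₁ : Even k₁) (he₂ : Even k₂) :
    (Nat.card (Cset ℓ k₁ k₂) : ℝ) / (Nat.card (Aset ℓ k₁ k₂) : ℝ)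
        = ((ℓ : ℝ) ^ 2 + 1) / ((ℓ : ℝ) ^ 2 - 1) ^ 2 ∧
    ((ℓ : ℝ) ^ 2 + 1) / ((ℓ : ℝ) ^ 2 - 1) ^ 2 ≤ 3 / (ℓ : ℝ) ^ 2 ∧
    Tendsto (fun n : ℕ => (n : ℝ) ^ 2 * ((n : ℝ) ^ 2 + 1) / ((n : ℝ) ^ 2 - 1) ^ 2)
      atTop (nhds 1) := by
  have hℓ3 : 3 ≤ ℓ := by
    have := hℓ.two_le
    rcases hodd with ⟨r, hr⟩
    omega
  have hℓR : (3 : ℝ) ≤ ℓ := by exact_mod_cast hℓ3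
  have hpos : (0 : ℝ) < (ℓ : ℝ) ^ 2 - 1 := by nlinarith
  refine ⟨?_, ?_, ?_⟩
  · have : Fact ℓ.Prime := ⟨hℓ⟩
    have hF : ringChar (ZMod ℓ) ≠ 2 := by
      rw [ZMod.ringChar_zmod_n]; omega
    have hm : Odd (k₁ - 1) := Nat.Even.sub_odd (by omega) he₁ odd_one
    have hn : Odd (k₂ - 1) := Nat.Even.sub_odd (by omega) he₂ odd_one
    let H := detPairs (ZMod ℓ) (k₁ - 1) (k₂ - 1)
    let _ : Fintype H := Fintype.ofFinite H
    have hA : (Nat.card (Aset ℓ k₁ k₂) : ℤ) = Fintype.card H * ((ℓ : ℤ) ^ 3 - ℓ) ^ 2 := by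
      have h := card_pairs (F := ZMod ℓ) (k₁ - 1) (k₂ - 1) (fun _ => True)
      simp only [and_true] at h
      have h' : Nat.card (Aset ℓ k₁ k₂) = _ := h
      rw [h']
      push_cast
      simp only [card_det, ZMod.card]
      simp [H]
      ring
    have hC : (Nat.card (Cset ℓ k₁ k₂) : ℤ) = Fintype.card H * ((ℓ : ℤ) ^ 4 + ℓ ^ 2) := by
      have h' : Nat.card (Cset ℓ k₁ k₂) = _ := card_pairs (F := ZMod ℓ) (k₁ - 1) (k₂ - 1)
        (fun g => Matrix.trace (g : Matrix (Fin 2) (Fin 2) (ZMod ℓ)) = 0)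
      rw [h']
      push_cast
      simp only [card_det_trace hF, ZMod.card]
      have hsum : ∀ h : H, ((ℓ : ℤ) ^ 2 + ℓ * quadraticChar (ZMod ℓ) (-(h.1.1 : ZMod ℓ))) *
          ((ℓ : ℤ) ^ 2 + ℓ * quadraticChar (ZMod ℓ) (-(h.1.2 : ZMod ℓ)))
          = ((ℓ : ℤ) ^ 4 + ℓ ^ 2) + 2 * ℓ ^ 3 * quadraticChar (ZMod ℓ) (-(h.1.1 : ZMod ℓ)) := by
        intro h
        obtain ⟨h1, h2⟩ := quadraticChar_detPairs hm hn h
        rw [h1]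
        linear_combination (ℓ : ℤ) ^ 2 * h2
      rw [Finset.sum_congr rfl (fun h _ => hsum h), Finset.sum_add_distrib, ← Finset.mul_sum,
        sum_quadraticChar_detPairs hF hm]
      simp [H]
    have hH : (0 : ℝ) < Fintype.card H := by exact_mod_cast Fintype.card_pos
    have hA' : (Nat.card (Aset ℓ k₁ k₂) : ℝ) = Fintype.card H * ((ℓ : ℝ) ^ 3 - ℓ) ^ 2 := by
      exact_mod_cast congrArg (Int.cast : ℤ → ℝ) hA
    have hC' : (Nat.card (Cset ℓ k₁ k₂) : ℝ) = Fintype.card H * ((ℓ : ℝ) ^ 4 + ℓ ^ 2) := by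
      exact_mod_cast congrArg (Int.cast : ℤ → ℝ) hC
    have hfac : (ℓ : ℝ) ^ 3 - ℓ = ℓ * ((ℓ : ℝ) ^ 2 - 1) := by ring
    rw [hA', hC', hfac]
    have h0 : (ℓ : ℝ) ≠ 0 := by positivity
    have h1 := hpos.ne'
    have h2 := hH.ne'
    field_simp
  · rw [div_le_div_iff₀ (by positivity) (by positivity)]
    nlinarith [mul_nonneg (by nlinarith : (0 : ℝ) ≤ (ℓ : ℝ) ^ 2 - 9) (sq_nonneg (ℓ : ℝ))]
  · have hinv : Tendsto (fun n : ℕ => ((n : ℝ)⁻¹)) atTop (nhds 0) :=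
      tendsto_inv_atTop_nhds_zero_nat
    -- Divide numerator and denominator by `n ^ 4`.
    have hlim : Tendsto (fun n : ℕ => (1 + ((n : ℝ)⁻¹) ^ 2) / (1 - ((n : ℝ)⁻¹) ^ 2) ^ 2)
        atTop (nhds ((1 + (0 : ℝ) ^ 2) / (1 - (0 : ℝ) ^ 2) ^ 2)) :=
      (tendsto_const_nhds.add (hinv.pow 2)).div
        ((tendsto_const_nhds.sub (hinv.pow 2)).pow 2) (by norm_num)
    have h1 : (1 + (0 : ℝ) ^ 2) / (1 - (0 : ℝ) ^ 2) ^ 2 = 1 := by norm_num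
    rw [h1] at hlim
    refine hlim.congr' ?_
    filter_upwards [eventually_ge_atTop 2] with n hn
    have hn' : (2 : ℝ) ≤ n := by exact_mod_cast hn
    have h0 : (n : ℝ) ≠ 0 := by positivity
    have h2 : (n : ℝ) ^ 2 - 1 ≠ 0 := by nlinarith
    have h3 : 1 - ((n : ℝ)⁻¹) ^ 2 = ((n : ℝ) ^ 2 - 1) / (n : ℝ) ^ 2 := by field_simp
    rw [h3]
    field_simp
end

section
/- There exist constants C > 0 and x₀ > 0 such that for all real x ≥ x₀, the integral ∫_{log x}^{x} Li(t)/t² dt satisfies |∫_{log x}^{x} Li(t)/t² dt − log log x| ≤ C·log log log x, where Li(t) = ∫_2^t du/log u is the logarithmic integral. -/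
open Real

/-- The logarithmic integral `Li(t) = ∫_2^t du / log u`. -/
noncomputable def Li (t : ℝ) : ℝ := ∫ u in (2 : ℝ)..t, 1 / Real.log u

/-!
Integration by parts: since `Li' = 1 / log`, the function `log log t - Li t / t` is an antiderivative
of `Li t / t ^ 2` on `t ≥ 2`. With `a = log x` the difference to be estimated is therefore
`Li a / a - Li x / x - log log log x`. The trivial bound `0 ≤ Li t / t ≤ 1 / log 2 ≤ 2`
(`Li_div_mem`) finishes the proof as soon as `log log log x ≥ 1`.
-/

lemma continuousOn_one_div_log {t : ℝ} (ht : 2 ≤ t) :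
    ContinuousOn (fun u : ℝ => 1 / Real.log u) (Set.uIcc 2 t) := by
  rw [Set.uIcc_of_le ht]
  refine continuousOn_const.div (continuousOn_id.log fun u hu => ?_) fun u hu => ?_
  · have := hu.1
    simp only [id]
    linarith
  · exact (Real.log_pos (by linarith [hu.1])).ne'

lemma hasDerivAt_Li {t : ℝ} (ht : 2 ≤ t) : HasDerivAt Li (1 / Real.log t) t := by
  refine intervalIntegral.integral_hasDerivAt_right
    (continuousOn_one_div_log ht).intervalIntegrable ?_ ?_
  · exact (Measurable.stronglyMeasurable (by fun_prop)).stronglyMeasurableAtFilter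
  · exact continuousAt_const.div (Real.continuousAt_log (by linarith))
      (Real.log_pos (by linarith)).ne'

lemma Li_div_mem {t : ℝ} (ht : 2 ≤ t) : 0 ≤ Li t / t ∧ Li t / t ≤ 2 := by
  have hl : (1 / 2 : ℝ) ≤ Real.log 2 := by linarith [Real.log_two_gt_d9]
  have hlog : ∀ u ∈ Set.Icc 2 t, (1 / 2 : ℝ) ≤ Real.log u := fun u hu =>
    hl.trans (Real.log_le_log (by norm_num) hu.1)
  have h0 : 0 ≤ Li t := intervalIntegral.integral_nonneg ht fun u hu =>
    one_div_nonneg.2 (by linarith [hlog u hu])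
  have h1 : Li t ≤ ∫ _ in (2 : ℝ)..t, (2 : ℝ) :=
    intervalIntegral.integral_mono_on ht (continuousOn_one_div_log ht).intervalIntegrable
      intervalIntegrable_const fun u hu => by
        have := hlog u hu
        rw [div_le_iff₀ (by linarith)]
        linarith
  rw [intervalIntegral.integral_const, smul_eq_mul] at h1
  exact ⟨div_nonneg h0 (by linarith), (div_le_iff₀ (by linarith)).2 (by linarith)⟩

lemma integral_Li_div_sq {a b : ℝ} (ha : 2 ≤ a) (hab : a ≤ b) :
    ∫ t in a..b, Li t / t ^ 2 =
      (Real.log (Real.log b) - Li b / b) - (Real.log (Real.log a) - Li a / a) := by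
  refine intervalIntegral.integral_eq_sub_of_hasDerivAt
    (f := fun t => Real.log (Real.log t) - Li t / t) (fun t ht => ?_) ?_
  · rw [Set.uIcc_of_le hab] at ht
    have h2 : 2 ≤ t := ha.trans ht.1
    have ht0 : t ≠ 0 := by linarith
    have hl : Real.log t ≠ 0 := (Real.log_pos (by linarith)).ne'
    refine (((Real.hasDerivAt_log ht0).log hl).sub
      ((hasDerivAt_Li h2).div (hasDerivAt_id t) ht0)).congr_deriv ?_
    simp only [id]
    field_simp
    ring
  · refine ContinuousOn.intervalIntegrable fun t ht => ?_
    rw [Set.uIcc_of_le hab] at ht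
    have h2 : 2 ≤ t := ha.trans ht.1
    exact ((hasDerivAt_Li h2).continuousAt.div (continuous_pow 2).continuousAt
      (pow_ne_zero 2 (by linarith))).continuousWithinAt

theorem integral_Li_over_t_sq : ∃ C : ℝ, 0 < C ∧ ∃ x₀ : ℝ, 0 < x₀ ∧
    ∀ x : ℝ, x₀ ≤ x →
      |(∫ t in (Real.log x)..x, Li t / t ^ 2) - Real.log (Real.log x)|
        ≤ C * Real.log (Real.log (Real.log x)) := by
  refine ⟨3, by norm_num, Real.exp (Real.exp (Real.exp 1)), Real.exp_pos _, fun x hx => ?_⟩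
  have hx0 : 0 < x := (Real.exp_pos _).trans_le hx
  have h1 : Real.exp (Real.exp 1) ≤ Real.log x := (Real.le_log_iff_exp_le hx0).2 hx
  have hl0 : 0 < Real.log x := (Real.exp_pos _).trans_le h1
  have h2 : Real.exp 1 ≤ Real.log (Real.log x) := (Real.le_log_iff_exp_le hl0).2 h1
  have h3 : 1 ≤ Real.log (Real.log (Real.log x)) :=
    (Real.le_log_iff_exp_le ((Real.exp_pos _).trans_le h2)).2 h2
  have ha : 2 ≤ Real.log x := by
    linarith [Real.add_one_le_exp (Real.exp 1), Real.add_one_le_exp (1 : ℝ)]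
  have hax : Real.log x ≤ x := by linarith [Real.log_le_sub_one_of_pos hx0]
  rw [integral_Li_div_sq ha hax, abs_le]
  obtain ⟨p, q⟩ := Li_div_mem ha
  obtain ⟨r, s⟩ := Li_div_mem (ha.trans hax)
  constructor <;> linarith
end
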